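/- (Contraction of the rearrangement in ℓ^p.) Let d ≥ 2, p ≥ 1, and let u, v : ℤ^d → [0,∞) with Σ_x u(x)^p < ∞ and Σ_x v(x)^p < ∞. Then Σ_{x∈ℤ^d} |u*(x) − v*(x)|^p ≤ Σ_{x∈ℤ^d} |u(x) − v(x)|^p, where u* = R_{ℤ^d} u and v* = R_{ℤ^d} v. Moreover, if p > 1 and u is Schwarz symmetric with strictly decreasing values a₁(u) > a₂(u) > a₃(u) > ⋯, then equality holds if and only if v = v*. -/

import Mathlib

open Filter Topology

noncomputable section

abbrev ZLat (d : ℕ) := Fin d → ℤ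

def stdVec (d : ℕ) (i : Fin d) : Fin d → ℝ := fun j => if j = i then 1 else 0

/-- The set of directions E⃗ ⊆ ℝ^d. -/
def Evec (d : ℕ) : Set (Fin d → ℝ) :=
  {e | (∃ i, e = stdVec d i) ∨
    (∃ i j : Fin d, i < j ∧ e = fun k => (stdVec d i k + stdVec d j k) / 2) ∨
    (∃ i j : Fin d, i < j ∧ e = fun k => (stdVec d i k - stdVec d j k) / 2)}

/-- A fixed enumeration of E⃗ (for d = 2 it is e₁, e₂, (e₁+e₂)/2, (e₁-e₂)/2). -/
def EvecList (d : ℕ) : List (Fin d → ℝ) :=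
  ((List.finRange d).map (stdVec d)) ++
  ((List.finRange d).flatMap fun i => (List.finRange d).filterMap fun j =>
    if i < j then some (fun k => (stdVec d i k + stdVec d j k) / 2) else none) ++
  ((List.finRange d).flatMap fun i => (List.finRange d).filterMap fun j =>
    if i < j then some (fun k => (stdVec d i k - stdVec d j k) / 2) else none)

/-- The n-th largest value of `u`, counted with multiplicity (1-indexed). -/
def nthLargest {α : Type*} (u : α → NNReal) (n : ℕ) : NNReal :=
  sSup {t | ∃ Ω : Finset α, Ω.card = n ∧ ∀ x ∈ Ω, t ≤ u x}

/-- The 1-indexed position of the point with doubled coordinate `m` in the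
spiral order 0, 1, −1, 2, −2, … (for even m) resp. 1/2, −1/2, 3/2, −3/2, … (for odd m). -/
def posIdx (m : ℤ) : ℕ := (if 0 < m then m else 1 - m).toNat

/-- `x` and `y` lie on a common line with direction `e`. -/
def sameLine {d : ℕ} (e : Fin d → ℝ) (x y : ZLat d) : Prop :=
  ∃ c : ℝ, (fun i => (x i : ℝ) - (y i : ℝ)) = c • e

/-- Twice the inner product ⟨e, x⟩, as an integer. -/
def pairing {d : ℕ} (e : Fin d → ℝ) (x : ZLat d) : ℤ :=
  ⌊2 * ∑ i, e i * (x i : ℝ)⌋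

/-- One-step rearrangement `R_e`. -/
def stepR {d : ℕ} (e : Fin d → ℝ) (u : ZLat d → NNReal) : ZLat d → NNReal :=
  fun x => nthLargest (fun y : {y : ZLat d // sameLine e x y} => u y.1) (posIdx (pairing e x))

/-- `R^k u` : k successive one-step rearrangements cycling through the fixed enumeration. -/
def iterR (d : ℕ) (u : ZLat d → NNReal) : ℕ → ZLat d → NNReal
  | 0 => u
  | k + 1 => stepR ((EvecList d).getD (k % (EvecList d).length) 0) (iterR d u k)

/-- The Schwarz rearrangement on ℤ^d : pointwise limit of `R^k u`. -/
def RZd (d : ℕ) (u : ZLat d → NNReal) : ZLat d → NNReal :=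
  fun x => limUnder atTop fun k => iterR d u k x

def Admissible {α : Type*} (u : α → NNReal) : Prop :=
  ∀ t : NNReal, 0 < t → {x | t < u x}.Finite

def Equimeasurable {α : Type*} (u v : α → NNReal) : Prop :=
  ∀ t : NNReal, 0 < t → Nonempty ({x | t < u x} ≃ {x | t < v x})

/-- Graph distance (ℓ¹ distance) on the lattice ℤ^d. -/
def latDist {d : ℕ} (x y : ZLat d) : ℕ := ∑ i, (x i - y i).natAbs

/-- The i-th standard basis vector of ℤ^d. -/
def latE {d : ℕ} (i : Fin d) : ZLat d := fun j => if j = i then 1 else 0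

/-- ‖∇u‖_p^p : the p-Sobolev energy, summing over each edge {x, x+e_i} once. -/
def gradEnergy (d : ℕ) (p : ℝ) (u : ZLat d → NNReal) : ENNReal :=
  ∑' (x : ZLat d) (i : Fin d), ENNReal.ofReal (|(u (x + latE i) : ℝ) - (u x : ℝ)| ^ p)

/-- ‖∇u‖_p. -/
def gradNorm (d : ℕ) (p : ℝ) (u : ZLat d → NNReal) : ENNReal :=
  gradEnergy d p u ^ (1 / p)

/-- Graph automorphism of the lattice graph ℤ^d. -/
def IsLatAuto {d : ℕ} (σ : ZLat d ≃ ZLat d) : Prop :=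
  ∀ x y : ZLat d, latDist (σ x) (σ y) = 1 ↔ latDist x y = 1

def Supermodular (G : NNReal → NNReal → NNReal) : Prop :=
  ∀ s t s₀ t₀ : NNReal, G (s + s₀) t + G s (t + t₀) ≤ G (s + s₀) (t + t₀) + G s t

def StrictlySupermodular (G : NNReal → NNReal → NNReal) : Prop :=
  ∀ s t s₀ t₀ : NNReal, 0 < s₀ → 0 < t₀ →
    G (s + s₀) t + G s (t + t₀) < G (s + s₀) (t + t₀) + G s t

/-- The values of `u` are strictly decreasing: a₁ > a₂ > a₃ > ⋯ . -/
def StrictRan {α : Type*} (u : α → NNReal) : Prop :=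
  ∀ n : ℕ, 0 < n → nthLargest u (n + 1) < nthLargest u n


/-! ### Basic facts on `nthLargest` -/

theorem nthLargest_gt {α : Type*} (f : α → NNReal) (hf : BddAbove (Set.range f)) {n : ℕ}
    (hn : 0 < n) (t : NNReal) :
    t < nthLargest f n ↔ ∃ Ω : Finset α, Ω.card = n ∧ ∀ x ∈ Ω, t < f x := by
  unfold nthLargest
  constructor
  · intro h
    have hne : {t | ∃ Ω : Finset α, Ω.card = n ∧ ∀ x ∈ Ω, t ≤ f x}.Nonempty := by
      by_contra hcon
      rw [Set.not_nonempty_iff_eq_empty] at hcon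
      rw [hcon] at h
      simp at h
    obtain ⟨s, ⟨Ω, h1, h2⟩, h3⟩ := exists_lt_of_lt_csSup hne h
    exact ⟨Ω, h1, fun x hx => h3.trans_le (h2 x hx)⟩
  · rintro ⟨Ω, h1, h2⟩
    have hne : Ω.Nonempty := by
      rw [← Finset.card_pos]; omega
    obtain ⟨x, hx, hmin⟩ := Finset.exists_min_image Ω f hne
    refine (h2 x hx).trans_le (le_csSup ?_ ⟨Ω, h1, hmin⟩)
    obtain ⟨B, hB⟩ := hf
    refine ⟨B, ?_⟩
    rintro s ⟨Ω', h1', h2'⟩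
    have hne' : Ω'.Nonempty := by
      rw [← Finset.card_pos]; omega
    obtain ⟨z, hz⟩ := hne'
    exact (h2' z hz).trans (hB ⟨z, rfl⟩)

theorem nthLargest_congr {α β : Type*} (σ : α ≃ β) (f : β → NNReal) (n : ℕ) :
    nthLargest (fun a => f (σ a)) n = nthLargest f n := by
  unfold nthLargest
  congr 1
  ext t
  constructor
  · rintro ⟨Ω, h1, h2⟩
    refine ⟨Ω.map σ.toEmbedding, by simpa using h1, ?_⟩
    intro x hx
    obtain ⟨a, ha, rfl⟩ := Finset.mem_map.1 hx
    exact h2 a ha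
  · rintro ⟨Ω, h1, h2⟩
    refine ⟨Ω.map σ.symm.toEmbedding, by simpa using h1, ?_⟩
    intro x hx
    obtain ⟨a, ha, rfl⟩ := Finset.mem_map.1 hx
    simpa using h2 a ha

theorem nthLargest_anti {α : Type*} (f : α → NNReal) (hf : BddAbove (Set.range f)) {n m : ℕ}
    (hn : 0 < n) (hnm : n ≤ m) : nthLargest f m ≤ nthLargest f n := by
  refine le_of_forall_lt fun t ht => ?_
  rw [nthLargest_gt f hf (by omega)] at ht
  rw [nthLargest_gt f hf hn]
  obtain ⟨Ω, h1, h2⟩ := ht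
  obtain ⟨Ω', h3, h4⟩ := Finset.exists_subset_card_eq (s := Ω) (n := n) (by omega)
  exact ⟨Ω', h4, fun x hx => h2 x (h3 hx)⟩

theorem Admissible.bdd {α : Type*} {f : α → NNReal} (hf : Admissible f) :
    BddAbove (Set.range f) := by
  have h := (hf 1 one_pos).image f
  obtain ⟨B, hB⟩ := h.bddAbove
  refine ⟨max B 1, ?_⟩
  rintro _ ⟨x, rfl⟩
  by_cases hx : 1 < f x
  · exact (hB ⟨x, hx, rfl⟩).trans (le_max_left _ _)
  · exact (not_lt.1 hx).trans (le_max_right _ _)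

theorem Admissible.comp_inj {α β : Type*} {f : α → NNReal} (hf : Admissible f) {σ : β → α}
    (hσ : Function.Injective σ) : Admissible (fun b => f (σ b)) := fun t ht =>
  (hf t ht).preimage (f := σ) hσ.injOn

theorem Admissible.exists_max {α : Type*} [Nonempty α] {f : α → NNReal} (hf : Admissible f) :
    ∃ x, ∀ y, f y ≤ f x := by
  by_cases h0 : ∀ y, f y = 0
  · exact ⟨Classical.arbitrary α, fun y => by simp [h0]⟩
  · push Not at h0
    obtain ⟨y, hy⟩ := h0
    have hy' : 0 < f y := pos_iff_ne_zero.2 hy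
    have hfin := hf (f y / 2) (half_pos hy')
    obtain ⟨x, hx, hmax⟩ := Set.exists_max_image _ f hfin ⟨y, by
      simpa using half_lt_self hy'⟩
    refine ⟨x, fun z => ?_⟩
    by_cases hz : f y / 2 < f z
    · exact hmax z hz
    · exact (not_lt.1 hz).trans (le_of_lt hx)

theorem nthLargest_one {α : Type*} {f : α → NNReal} (hf : BddAbove (Set.range f)) {x : α}
    (hx : ∀ y, f y ≤ f x) : nthLargest f 1 = f x := by
  refine eq_of_forall_lt_iff fun t => ?_
  rw [nthLargest_gt f hf one_pos]
  constructor
  · rintro ⟨Ω, h1, h2⟩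
    obtain ⟨a, rfl⟩ := Finset.card_eq_one.1 h1
    exact (h2 a (by simp)).trans_le (hx a)
  · intro h
    exact ⟨{x}, by simp, by simpa using h⟩

theorem nthLargest_succ {α : Type*} {f : α → NNReal} (hf : BddAbove (Set.range f)) {x : α}
    (hx : ∀ y, f y ≤ f x) {n : ℕ} (hn : 0 < n) :
    nthLargest (fun z : {z // z ≠ x} => f z.1) n = nthLargest f (n + 1) := by
  classical
  have hf' : BddAbove (Set.range (fun z : {z // z ≠ x} => f z.1)) := by
    refine hf.mono ?_
    rintro _ ⟨z, rfl⟩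
    exact ⟨z.1, rfl⟩
  refine eq_of_forall_lt_iff fun t => ?_
  rw [nthLargest_gt _ hf' hn, nthLargest_gt f hf (by omega)]
  constructor
  · rintro ⟨Ω, h1, h2⟩
    have hne : Ω.Nonempty := by
      rw [← Finset.card_pos]; omega
    obtain ⟨z, hz⟩ := hne
    have hnot : x ∉ Ω.map (Function.Embedding.subtype _) := by
      simp
    refine ⟨insert x (Ω.map (Function.Embedding.subtype _)), ?_, ?_⟩
    · rw [Finset.card_insert_of_notMem hnot, Finset.card_map, h1]
    · intro a ha
      rcases Finset.mem_insert.1 ha with rfl | ha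
      · exact (h2 z hz).trans_le (hx _)
      · obtain ⟨b, hb, rfl⟩ := Finset.mem_map.1 ha
        exact h2 b hb
  · rintro ⟨Ω, h1, h2⟩
    have hc : n ≤ (Ω.erase x).card := by
      have := Finset.pred_card_le_card_erase (s := Ω) (a := x)
      omega
    obtain ⟨Ω', h3, h4⟩ := Finset.exists_subset_card_eq hc
    refine ⟨Ω'.subtype (fun z => z ≠ x), ?_, ?_⟩
    · rw [Finset.card_subtype, Finset.filter_true_of_mem, h4]
      intro a ha
      exact Finset.ne_of_mem_erase (h3 ha)
    · intro a ha
      exact h2 _ (Finset.mem_of_mem_erase (h3 (Finset.mem_subtype.1 ha)))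

/-! ### Costs with the Monge property, swaps and the one dimensional inequality -/

def Monge (c : NNReal → NNReal → ENNReal) : Prop :=
  ∀ a a' b b' : NNReal, a' ≤ a → b' ≤ b → c a b + c a' b' ≤ c a b' + c a' b

theorem tsum_two {α : Type*} [DecidableEq α] (h : α → ENNReal) {x y : α} (hxy : x ≠ y) :
    ∑' z, h z = h x + h y + ∑' z, (if z = x then 0 else if z = y then 0 else h z) := by
  rw [ENNReal.tsum_eq_add_tsum_ite x, ENNReal.tsum_eq_add_tsum_ite y, ← add_assoc]
  congr 1
  · simp [hxy.symm]
  · refine tsum_congr fun z => ?_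
    by_cases h1 : z = y <;> by_cases h2 : z = x <;> simp [h1, h2]

theorem tsum_swap_eq {α : Type*} [DecidableEq α] (c : NNReal → NNReal → ENNReal) (f g : α → NNReal)
    {x y : α} (hxy : x ≠ y) :
    ∑' z, c (f z) (g (Equiv.swap x y z)) = c (f x) (g y) + c (f y) (g x) +
      ∑' z, (if z = x then 0 else if z = y then 0 else c (f z) (g z)) := by
  rw [tsum_two _ hxy]
  congr 1
  · simp
  · refine tsum_congr fun z => ?_
    by_cases h1 : z = y
    · simp [h1]
    · by_cases h2 : z = x
      · simp [h2]
      · simp [h1, h2, Equiv.swap_apply_of_ne_of_ne h2 h1]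

theorem tsum_swap_le {α : Type*} [DecidableEq α] (c : NNReal → NNReal → ENNReal) (f g : α → NNReal)
    {x y : α} (h : c (f x) (g y) + c (f y) (g x) ≤ c (f x) (g x) + c (f y) (g y)) :
    ∑' z, c (f z) (g (Equiv.swap x y z)) ≤ ∑' z, c (f z) (g z) := by
  by_cases hxy : x = y
  · subst hxy; simp
  · rw [tsum_swap_eq c f g hxy, tsum_two (fun z => c (f z) (g z)) hxy]
    gcongr

theorem tsum_swap_lt {α : Type*} [DecidableEq α] (c : NNReal → NNReal → ENNReal) (f g : α → NNReal)
    {x y : α} (h : c (f x) (g y) + c (f y) (g x) < c (f x) (g x) + c (f y) (g y))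
    (hfin : ∑' z, c (f z) (g z) < ⊤) :
    ∑' z, c (f z) (g (Equiv.swap x y z)) < ∑' z, c (f z) (g z) := by
  have hxy : x ≠ y := by
    rintro rfl
    exact lt_irrefl _ h
  rw [tsum_two (fun z => c (f z) (g z)) hxy] at hfin ⊢
  rw [tsum_swap_eq c f g hxy]
  refine ENNReal.add_lt_add_right ?_ h
  exact ((le_add_self).trans_lt hfin).ne

theorem oneDim_aux (c : NNReal → NNReal → ENNReal) (hc : Monge c) (N : ℕ) :
    ∀ (α : Type) [Infinite α] (f g : α → NNReal), Admissible f → Admissible g →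
      ∑ n ∈ Finset.range N, c (nthLargest f (n + 1)) (nthLargest g (n + 1)) ≤
        ∑' z, c (f z) (g z) := by
  induction N with
  | zero => intro α _ f g hf hg; simp
  | succ N ih =>
    intro α _ f g hf hg
    classical
    obtain ⟨x, hx⟩ := hf.exists_max
    obtain ⟨y, hy⟩ := hg.exists_max
    set g' : α → NNReal := fun z => g (Equiv.swap x y z) with hg'
    have hg'a : Admissible g' := hg.comp_inj (Equiv.injective _)
    have hg'x : ∀ z, g' z ≤ g' x := by
      intro z
      simp only [hg', Equiv.swap_apply_left]
      exact hy _
    have h1 : ∑' z, c (f z) (g' z) ≤ ∑' z, c (f z) (g z) :=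
      tsum_swap_le c f g (by
        have := hc _ _ _ _ (hx y) (hy x)
        exact this)
    refine le_trans ?_ h1
    have h2 : ∀ n, nthLargest g n = nthLargest g' n := fun n =>
      (nthLargest_congr (Equiv.swap x y) g n).symm
    simp only [h2]
    rw [Finset.sum_range_succ']
    have hinf : Infinite {z // z ≠ x} :=
      ((Set.finite_singleton x).infinite_compl).to_subtype
    have ih' := ih {z // z ≠ x} (fun z => f z.1) (fun z => g' z.1)
      (hf.comp_inj Subtype.val_injective) (hg'a.comp_inj Subtype.val_injective)
    rw [zero_add, nthLargest_one hf.bdd hx, nthLargest_one hg'a.bdd hg'x]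
    have h3 : ∀ n, nthLargest (fun z : {z // z ≠ x} => f z.1) (n + 1) = nthLargest f (n + 1 + 1) :=
      fun n => nthLargest_succ hf.bdd hx (Nat.succ_pos n)
    have h4 : ∀ n, nthLargest (fun z : {z // z ≠ x} => g' z.1) (n + 1)
        = nthLargest g' (n + 1 + 1) :=
      fun n => nthLargest_succ hg'a.bdd hg'x (Nat.succ_pos n)
    simp only [h3, h4] at ih'
    rw [ENNReal.tsum_eq_add_tsum_ite x, add_comm]
    gcongr
    refine ih'.trans (le_of_eq ?_)
    have := tsum_subtype {z | z ≠ x} (fun z => c (f z) (g' z))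
    refine this.trans (tsum_congr fun z => ?_)
    by_cases hz : z = x <;> simp [Set.indicator, hz]

theorem oneDim (c : NNReal → NNReal → ENNReal) (hc : Monge c) (f g : ℕ → NNReal)
    (hf : Admissible f) (hg : Admissible g) :
    ∑' n, c (nthLargest f (n + 1)) (nthLargest g (n + 1)) ≤ ∑' z, c (f z) (g z) := by
  rw [ENNReal.tsum_eq_iSup_nat]
  exact iSup_le fun N => oneDim_aux c hc N ℕ f g hf hg

/-! ### Lines and one-step rearrangements -/

abbrev pos {d : ℕ} (e : Fin d → ℝ) (x : ZLat d) : ℕ := posIdx (pairing e x)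

theorem posIdx_pos (m : ℤ) : 0 < posIdx m := by
  unfold posIdx; split_ifs <;> omega

theorem sameLine_refl {d : ℕ} (e : Fin d → ℝ) (x : ZLat d) : sameLine e x x :=
  ⟨0, by ext i; simp⟩

theorem sameLine_symm {d : ℕ} {e : Fin d → ℝ} {x y : ZLat d} (h : sameLine e x y) :
    sameLine e y x := by
  obtain ⟨c, hc⟩ := h
  refine ⟨-c, ?_⟩
  ext i
  have := congrFun hc i
  simp only [Pi.smul_apply, smul_eq_mul] at this ⊢
  linarith

theorem sameLine_trans {d : ℕ} {e : Fin d → ℝ} {x y z : ZLat d} (h : sameLine e x y)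
    (h' : sameLine e y z) : sameLine e x z := by
  obtain ⟨c, hc⟩ := h
  obtain ⟨c', hc'⟩ := h'
  refine ⟨c + c', ?_⟩
  ext i
  have := congrFun hc i
  have := congrFun hc' i
  simp only [Pi.smul_apply, smul_eq_mul] at *
  linarith

structure GoodDir {d : ℕ} (e : Fin d → ℝ) : Prop where
  inj : ∀ x y : ZLat d, sameLine e x y → pos e x = pos e y → x = y
  surj : ∀ (x : ZLat d) (n : ℕ), 0 < n → ∃ y, sameLine e x y ∧ pos e y = n

def lineSetoid {d : ℕ} (e : Fin d → ℝ) : Setoid (ZLat d) where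
  r := sameLine e
  iseqv := ⟨sameLine_refl e, sameLine_symm, sameLine_trans⟩

theorem GoodDir.exists_equiv {d : ℕ} {e : Fin d → ℝ} (he : GoodDir e) :
    ∃ φ : ZLat d ≃ Quotient (lineSetoid e) × ℕ,
      ∀ x, φ x = (Quotient.mk (lineSetoid e) x, pos e x - 1) := by
  refine ⟨Equiv.ofBijective (fun x => (Quotient.mk (lineSetoid e) x, pos e x - 1)) ⟨?_, ?_⟩,
    fun x => rfl⟩
  · intro x y hxy
    simp only [Prod.mk.injEq] at hxy
    have h1 : sameLine e x y := Quotient.exact hxy.1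
    have h2 := posIdx_pos (pairing e x)
    have h3 := posIdx_pos (pairing e y)
    exact he.inj x y h1 (by simp only [pos] at hxy ⊢; omega)
  · rintro ⟨q, n⟩
    obtain ⟨x, rfl⟩ := Quotient.exists_rep q
    obtain ⟨y, hy1, hy2⟩ := he.surj x (n + 1) (Nat.succ_pos n)
    refine ⟨y, ?_⟩
    simp only [Prod.mk.injEq]
    exact ⟨Quotient.sound (sameLine_symm hy1), by omega⟩

theorem GoodDir.stepR_eq {d : ℕ} {e : Fin d → ℝ} (φ : ZLat d ≃ Quotient (lineSetoid e) × ℕ)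
    (hφ : ∀ x, φ x = (Quotient.mk (lineSetoid e) x, pos e x - 1))
    (u : ZLat d → NNReal) (q : Quotient (lineSetoid e)) (n : ℕ) :
    stepR e u (φ.symm (q, n)) = nthLargest (fun m => u (φ.symm (q, m))) (n + 1) := by
  have key : ∀ m, (Quotient.mk (lineSetoid e) (φ.symm (q, m)), pos e (φ.symm (q, m)) - 1)
      = (q, m) := fun m => by rw [← hφ, Equiv.apply_symm_apply]
  have hline : ∀ m, sameLine e (φ.symm (q, n)) (φ.symm (q, m)) := by
    intro m
    have h1 := congrArg Prod.fst (key m)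
    have h2 := congrArg Prod.fst (key n)
    exact Quotient.exact (h2.trans h1.symm)
  let σ : ℕ ≃ {y : ZLat d // sameLine e (φ.symm (q, n)) y} :=
    Equiv.ofBijective (fun m => ⟨φ.symm (q, m), hline m⟩) (by
      constructor
      · intro a b hab
        have := congrArg Subtype.val hab
        simpa using this
      · rintro ⟨y, hy⟩
        refine ⟨pos e y - 1, ?_⟩
        apply Subtype.ext
        show φ.symm (q, pos e y - 1) = y
        rw [Equiv.symm_apply_eq, hφ]
        have h2 := congrArg Prod.fst (key n)
        rw [Prod.mk.injEq]
        refine ⟨?_, rfl⟩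
        exact h2.symm.trans (Quotient.sound hy))
  have h := nthLargest_congr σ (fun y => u y.1) (pos e (φ.symm (q, n)))
  have hp : pos e (φ.symm (q, n)) = n + 1 := by
    have h2 := congrArg Prod.snd (key n)
    have h3 := posIdx_pos (pairing e (φ.symm (q, n)))
    simp only [pos] at h2 ⊢
    omega
  rw [hp] at h
  unfold stepR
  show nthLargest _ (pos e (φ.symm (q, n))) = _
  rw [hp, ← h]
  rfl

theorem stepR_contract {d : ℕ} {e : Fin d → ℝ} (he : GoodDir e) (c : NNReal → NNReal → ENNReal)
    (hc : Monge c) {u v : ZLat d → NNReal} (hu : Admissible u) (hv : Admissible v) :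
    ∑' x, c (stepR e u x) (stepR e v x) ≤ ∑' x, c (u x) (v x) := by
  obtain ⟨φ, hφ⟩ := he.exists_equiv
  rw [← φ.symm.tsum_eq (fun x => c (stepR e u x) (stepR e v x)),
    ← φ.symm.tsum_eq (fun x => c (u x) (v x)), ENNReal.tsum_prod', ENNReal.tsum_prod']
  refine ENNReal.tsum_le_tsum fun q => ?_
  simp only [GoodDir.stepR_eq φ hφ]
  have hinj : Function.Injective (fun m : ℕ => φ.symm (q, m)) := by
    intro a b hab
    simpa using hab
  exact oneDim c hc _ _ (hu.comp_inj hinj) (hv.comp_inj hinj)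

theorem stepR_swap {d : ℕ} {e : Fin d → ℝ} (v : ZLat d → NNReal) {x y : ZLat d}
    (hxy : sameLine e x y) :
    stepR e (fun z => v (Equiv.swap x y z)) = stepR e v := by
  funext z
  have hmem : ∀ a, sameLine e z a ↔ sameLine e z (Equiv.swap x y a) := by
    intro a
    by_cases h1 : a = x
    · subst h1
      rw [Equiv.swap_apply_left]
      exact ⟨fun h => sameLine_trans h hxy, fun h => sameLine_trans h (sameLine_symm hxy)⟩
    · by_cases h2 : a = y
      · subst h2
        rw [Equiv.swap_apply_right]
        exact ⟨fun h => sameLine_trans h (sameLine_symm hxy), fun h => sameLine_trans h hxy⟩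
      · rw [Equiv.swap_apply_of_ne_of_ne h1 h2]
  have h := nthLargest_congr ((Equiv.swap x y).subtypeEquiv hmem)
    (fun a : {a : ZLat d // sameLine e z a} => v a.1) (pos e z)
  exact h

theorem stepR_strict {d : ℕ} {e : Fin d → ℝ} (he : GoodDir e) (c : NNReal → NNReal → ENNReal)
    (hc : Monge c) {u v : ZLat d → NNReal} (hu : Admissible u) (hv : Admissible v)
    (hue : stepR e u = u) {x y : ZLat d} (hxy : sameLine e x y)
    (h : c (u x) (v y) + c (u y) (v x) < c (u x) (v x) + c (u y) (v y))
    (hfin : ∑' x, c (u x) (v x) < ⊤) :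
    ∑' x, c (u x) (stepR e v x) < ∑' x, c (u x) (v x) := by
  refine lt_of_le_of_lt ?_ (tsum_swap_lt c u v h hfin)
  have := stepR_contract he c hc hu (hv.comp_inj (Equiv.injective (Equiv.swap x y)))
  rw [hue, stepR_swap v hxy] at this
  exact this

theorem stepR_gt {d : ℕ} {e : Fin d → ℝ} (he : GoodDir e) {u : ZLat d → NNReal}
    (hu : Admissible u) (t : NNReal)
    (h : ∀ x y, sameLine e x y → pos e x < pos e y → t < u y → t < u x) (x : ZLat d) :
    t < stepR e u x ↔ t < u x := by
  classical
  have hb : BddAbove (Set.range (fun y : {y : ZLat d // sameLine e x y} => u y.1)) :=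
    (hu.comp_inj Subtype.val_injective).bdd
  have h0 : t < stepR e u x ↔ _ := nthLargest_gt _ hb (posIdx_pos (pairing e x)) t
  rw [h0]
  constructor
  · rintro ⟨Ω, h1, h2⟩
    by_contra hx
    have hsmall : ∀ z ∈ Ω, pos e z.1 < pos e x := by
      intro z hz
      rcases lt_trichotomy (pos e z.1) (pos e x) with h3 | h3 | h3
      · exact h3
      · exfalso
        have := he.inj _ _ z.2 h3.symm
        apply hx
        rw [this]
        exact h2 z hz
      · exact absurd (h x z.1 z.2 h3 (h2 z hz)) hx
    have hcard : Ω.card ≤ (Finset.Ico 1 (pos e x)).card := by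
      refine Finset.card_le_card_of_injOn (fun z => pos e z.1) ?_ ?_
      · intro z hz
        simp only [Finset.coe_Ico, Set.mem_Ico]
        exact ⟨posIdx_pos _, hsmall z hz⟩
      · intro a _ b _ hab
        exact Subtype.ext (he.inj _ _ (sameLine_trans (sameLine_symm a.2) b.2) hab)
    rw [h1, Nat.card_Ico] at hcard
    have := posIdx_pos (pairing e x)
    simp only [pos] at hcard
    omega
  · intro hx
    choose g hg1 hg2 using fun n : ℕ => he.surj x (n + 1) (Nat.succ_pos n)
    refine ⟨(Finset.range (pos e x)).image (fun n => ⟨g n, hg1 n⟩), ?_, ?_⟩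
    · rw [Finset.card_image_of_injective, Finset.card_range]
      intro a b hab
      have hab' : g a = g b := congrArg Subtype.val hab
      have h3 := hg2 a
      rw [hab', hg2 b] at h3
      omega
    · intro z hz
      obtain ⟨n, hn, rfl⟩ := Finset.mem_image.1 hz
      have hn' := Finset.mem_range.1 hn
      have h3 := hg2 n
      show t < u (g n)
      rcases lt_or_eq_of_le (show pos e (g n) ≤ pos e x by omega) with h4 | h4
      · exact h _ _ (sameLine_symm (hg1 n)) h4 hx
      · rw [he.inj _ _ (sameLine_symm (hg1 n)) h4]
        exact hx

/-- `u` is nonincreasing along the spiral on every line of direction `e`. -/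
def MonoDir {d : ℕ} (e : Fin d → ℝ) (u : ZLat d → NNReal) : Prop :=
  ∀ x y, sameLine e x y → pos e x < pos e y → u y ≤ u x

theorem MonoDir.stepR_eq {d : ℕ} {e : Fin d → ℝ} (he : GoodDir e) {u : ZLat d → NNReal}
    (hu : Admissible u) (h : MonoDir e u) : stepR e u = u := by
  funext x
  exact eq_of_forall_lt_iff fun t =>
    stepR_gt he hu t (fun x y h1 h2 h3 => h3.trans_le (h x y h1 h2)) x

theorem stepR_mono {d : ℕ} {e : Fin d → ℝ} {u : ZLat d → NNReal}
    (hu : Admissible u) : MonoDir e (stepR e u) := by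
  intro x y hxy hlt
  have hmem : ∀ a, sameLine e x a ↔ sameLine e y a := fun a =>
    ⟨fun h => sameLine_trans (sameLine_symm hxy) h, fun h => sameLine_trans hxy h⟩
  have h1 := nthLargest_congr (Equiv.subtypeEquivRight hmem)
    (fun a : {a : ZLat d // sameLine e y a} => u a.1) (pos e x)
  have h2 : stepR e u x = nthLargest (fun a : {a : ZLat d // sameLine e y a} => u a.1) (pos e x) :=
    h1
  rw [h2]
  exact nthLargest_anti _ (hu.comp_inj Subtype.val_injective).bdd (posIdx_pos _) hlt.le

/-! ### The potential -/

def Phi {d : ℕ} (x : ZLat d) : ℤ :=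
  ∑ i : Fin d, ((4 * (d : ℤ) + 1) * (x i) ^ 2 - 2 * ((d : ℤ) - (i : ℕ)) * x i)

theorem phi_term (d : ℕ) (i : Fin d) (a : ℤ) :
    |a| ≤ (4 * (d : ℤ) + 1) * a ^ 2 - 2 * ((d : ℤ) - (i : ℕ)) * a := by
  have hi : ((i : ℕ) : ℤ) < d := by exact_mod_cast i.2
  have hi0 : (0 : ℤ) ≤ ((i : ℕ) : ℤ) := by positivity
  have h1 : |a| ≤ a ^ 2 := by
    rcases eq_or_ne a 0 with rfl | h
    · simp
    · have h2 : 1 ≤ |a| := Int.one_le_abs h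
      calc |a| ≤ |a| * |a| := by nlinarith
        _ = a ^ 2 := by rw [← sq, sq_abs]
  have h2 : a ≤ |a| := le_abs_self a
  have h3 : 0 ≤ |a| := abs_nonneg a
  have h4 : 0 ≤ ((d : ℤ) - (i : ℕ)) * (|a| - a) := mul_nonneg (by linarith) (by linarith)
  have h5 : 0 ≤ (i : ℕ) * |a| := by positivity
  have h6 : 0 ≤ (4 * (d : ℤ) + 1) * (a ^ 2 - |a|) := mul_nonneg (by linarith) (by linarith)
  have h7 : 0 ≤ (d : ℤ) * |a| := by positivity
  nlinarith

theorem abs_le_Phi {d : ℕ} (x : ZLat d) (i : Fin d) : |x i| ≤ Phi x := by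
  unfold Phi
  refine (phi_term d i (x i)).trans ?_
  exact Finset.single_le_sum
    (f := fun i : Fin d => (4 * (d : ℤ) + 1) * (x i) ^ 2 - 2 * ((d : ℤ) - (i : ℕ)) * x i)
    (fun j _ => (abs_nonneg _).trans (phi_term d j (x j))) (Finset.mem_univ i)

theorem Phi_nonneg {d : ℕ} (x : ZLat d) : 0 ≤ Phi x :=
  Finset.sum_nonneg fun j _ => (abs_nonneg _).trans (phi_term d j (x j))

theorem Phi_finite (d : ℕ) (M : ℤ) : {x : ZLat d | Phi x ≤ M}.Finite := by
  refine (Set.finite_Icc (fun _ => -M : ZLat d) (fun _ => M)).subset ?_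
  intro x hx
  have h : ∀ i, |x i| ≤ M := fun i => (abs_le_Phi x i).trans hx
  exact ⟨fun i => (abs_le.1 (h i)).1, fun i => (abs_le.1 (h i)).2⟩

/-- Along lines of direction `e` the potential increases with the spiral position. -/
def PhiMono {d : ℕ} (e : Fin d → ℝ) : Prop :=
  ∀ x y : ZLat d, sameLine e x y → pos e x < pos e y → Phi x < Phi y

theorem quad_lt (N η lam m k : ℤ) (hl : 1 ≤ lam) (hη : 0 < η) (hN : 2 * η < N)
    (h : posIdx m < posIdx (m + 2 * k)) :
    0 < lam * N * (k * m + k ^ 2) - 2 * k * η := by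
  have hA : 0 < k * m + k ^ 2 ∨ (k * m + k ^ 2 = 0 ∧ k < 0) := by
    unfold posIdx at h
    have hk : k * m + k ^ 2 = k * (m + k) := by ring
    rw [hk]
    rcases lt_trichotomy k 0 with h1 | h1 | h1
    · rcases lt_trichotomy (m + k) 0 with h2 | h2 | h2
      · left; exact mul_pos_of_neg_of_neg h1 h2
      · right; exact ⟨by rw [h2]; simp, h1⟩
      · exfalso; split_ifs at h <;> omega
    · subst h1; simp at h
    · left
      apply mul_pos h1
      split_ifs at h <;> omega
  rcases hA with hA | ⟨hA, hk⟩
  · have h1 : |k| ≤ k * m + k ^ 2 := by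
      have hk : k * m + k ^ 2 = k * (m + k) := by ring
      rw [hk] at hA ⊢
      rw [← abs_of_pos hA, abs_mul]
      have : 1 ≤ |m + k| := Int.one_le_abs (by rintro h0; rw [h0] at hA; simp at hA)
      nlinarith [abs_nonneg k]
    have h2 : k ≤ |k| := le_abs_self k
    have h3 : N * (k * m + k ^ 2) ≤ lam * (N * (k * m + k ^ 2)) :=
      le_mul_of_one_le_left (by nlinarith) hl
    have h4 : 2 * η * (k * m + k ^ 2) < N * (k * m + k ^ 2) := by nlinarith
    nlinarith
  · rw [hA]; nlinarith

theorem goodDir_of {d : ℕ} {e : Fin d → ℝ} (b : ZLat d)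
    (hline : ∀ x y, sameLine e x y ↔ ∃ k : ℤ, y = x + k • b)
    (hpair : ∀ x (k : ℤ), pairing e (x + k • b) = pairing e x + 2 * k) : GoodDir e := by
  constructor
  · intro x y hxy hp
    obtain ⟨k, rfl⟩ := (hline x y).1 hxy
    simp only [pos, hpair] at hp
    have hk : k = 0 := by
      unfold posIdx at hp
      split_ifs at hp <;> omega
    simp [hk]
  · intro x n hn
    rcases Int.emod_two_eq_zero_or_one (pairing e x - n) with h | h
    · refine ⟨x + ((n - pairing e x) / 2) • b, (hline _ _).2 ⟨_, rfl⟩, ?_⟩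
      simp only [pos, hpair, posIdx]
      split_ifs <;> omega
    · refine ⟨x + ((1 - n - pairing e x) / 2) • b, (hline _ _).2 ⟨_, rfl⟩, ?_⟩
      simp only [pos, hpair, posIdx]
      split_ifs <;> omega

theorem phiMono_of {d : ℕ} {e : Fin d → ℝ} (b : ZLat d)
    (hline : ∀ x y, sameLine e x y ↔ ∃ k : ℤ, y = x + k • b)
    (hpair : ∀ x (k : ℤ), pairing e (x + k • b) = pairing e x + 2 * k)
    (lam η : ℤ) (hl : 1 ≤ lam) (hη : 0 < η) (hN : 2 * η < 4 * (d : ℤ) + 1)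
    (hphi : ∀ x (k : ℤ), Phi (x + k • b) = Phi x +
      (lam * (4 * (d : ℤ) + 1) * (k * pairing e x + k ^ 2) - 2 * k * η)) : PhiMono e := by
  intro x y hxy hp
  obtain ⟨k, rfl⟩ := (hline x y).1 hxy
  simp only [pos, hpair] at hp
  rw [hphi]
  have := quad_lt (4 * (d : ℤ) + 1) η lam _ k hl hη hN hp
  linarith

/-! ### The concrete directions -/

theorem pairing_std {d : ℕ} (i : Fin d) (x : ZLat d) : pairing (stdVec d i) x = 2 * x i := by
  unfold pairing stdVec
  have : 2 * ∑ k, (if k = i then (1 : ℝ) else 0) * (x k : ℝ) = ((2 * x i : ℤ) : ℝ) := by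
    simp
  rw [this, Int.floor_intCast]

theorem line_std {d : ℕ} (i : Fin d) (x y : ZLat d) :
    sameLine (stdVec d i) x y ↔ ∃ k : ℤ, y = x + k • latE i := by
  constructor
  · rintro ⟨c, hc⟩
    refine ⟨y i - x i, ?_⟩
    ext l
    have hl := congrFun hc l
    by_cases h : l = i
    · subst h; simp [latE]
    · simp [stdVec, h] at hl
      simp [latE, h]
      have : (x l : ℝ) = y l := by linarith
      exact_mod_cast this.symm
  · rintro ⟨k, rfl⟩
    refine ⟨-k, ?_⟩
    ext l
    by_cases h : l = i <;> simp [latE, stdVec, h]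

theorem goodDir_std {d : ℕ} (i : Fin d) : GoodDir (stdVec d i) ∧ PhiMono (stdVec d i) := by
  have hp : ∀ (x : ZLat d) (k : ℤ),
      pairing (stdVec d i) (x + k • latE i) = pairing (stdVec d i) x + 2 * k := by
    intro x k
    rw [pairing_std, pairing_std]
    simp [latE]; ring
  have hi : ((i : ℕ) : ℤ) < d := by exact_mod_cast i.2
  have hi0 : (0 : ℤ) ≤ ((i : ℕ) : ℤ) := by positivity
  refine ⟨goodDir_of (latE i) (line_std i) hp,
    phiMono_of (latE i) (line_std i) hp 1 ((d : ℤ) - (i : ℕ)) le_rfl (by linarith)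
      (by linarith) ?_⟩
  intro x k
  rw [pairing_std, ← sub_eq_iff_eq_add']
  unfold Phi
  rw [← Finset.sum_sub_distrib]
  have : ∀ l : Fin d, (4 * (d : ℤ) + 1) * ((x + k • latE i) l) ^ 2
      - 2 * ((d : ℤ) - (l : ℕ)) * (x + k • latE i) l
      - ((4 * (d : ℤ) + 1) * (x l) ^ 2 - 2 * ((d : ℤ) - (l : ℕ)) * x l)
      = if l = i then (4 * (d : ℤ) + 1) * (2 * k * x l + k ^ 2) - 2 * ((d : ℤ) - (l : ℕ)) * k
        else 0 := by
    intro l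
    by_cases h : l = i
    · simp [latE, h]; ring
    · simp [latE, h]
  rw [Finset.sum_congr rfl (fun l _ => this l)]
  rw [Finset.sum_ite_eq' Finset.univ i]
  simp
  ring

/-- The direction `(e_i + s e_j) / 2`. -/
def diagVec {d : ℕ} (i j : Fin d) (s : ℤ) : Fin d → ℝ :=
  fun k => (stdVec d i k + s * stdVec d j k) / 2

theorem pairing_diag {d : ℕ} (i j : Fin d) (s : ℤ) (x : ZLat d) :
    pairing (diagVec i j s) x = x i + s * x j := by
  unfold pairing diagVec stdVec
  have : 2 * ∑ k, ((if k = i then (1 : ℝ) else 0) + s * (if k = j then (1 : ℝ) else 0)) / 2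
      * (x k : ℝ) = ((x i + s * x j : ℤ) : ℝ) := by
    have h : ∀ k, ((if k = i then (1 : ℝ) else 0) + s * (if k = j then (1 : ℝ) else 0)) / 2
      * (x k : ℝ) = (if k = i then (x k : ℝ) / 2 else 0) +
        (if k = j then s * (x k : ℝ) / 2 else 0) := by
      intro k
      split_ifs <;> ring
    rw [Finset.sum_congr rfl (fun k _ => h k), Finset.sum_add_distrib]
    simp
    ring
  rw [this, Int.floor_intCast]

theorem line_diag {d : ℕ} {i j : Fin d} (hij : i ≠ j) (s : ℤ) (x y : ZLat d) :
    sameLine (diagVec i j s) x y ↔ ∃ k : ℤ, y = x + k • (latE i + s • latE j) := by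
  constructor
  · rintro ⟨c, hc⟩
    refine ⟨y i - x i, ?_⟩
    have hi := congrFun hc i
    simp [diagVec, stdVec, hij] at hi
    ext l
    have hl := congrFun hc l
    by_cases h : l = i
    · subst h; simp [latE, hij]
    · by_cases h' : l = j
      · subst h'
        simp [diagVec, stdVec, hij.symm] at hl
        simp [latE, hij.symm]
        have : (y l : ℝ) = x l + (y i - x i) * s := by linear_combination -hl + s * hi
        exact_mod_cast this
      · simp [diagVec, stdVec, h, h'] at hl
        simp [latE, h, h']
        have : (x l : ℝ) = y l := by linarith
        exact_mod_cast this.symm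
  · rintro ⟨k, rfl⟩
    refine ⟨-(2 * k), ?_⟩
    ext l
    simp only [latE, diagVec, stdVec, Pi.add_apply, Pi.smul_apply, smul_eq_mul]
    split_ifs <;> push_cast <;> ring

theorem goodDir_diag {d : ℕ} {i j : Fin d} (hij : i < j) {s : ℤ} (hs : s = 1 ∨ s = -1) :
    GoodDir (diagVec i j s) ∧ PhiMono (diagVec i j s) := by
  have hne : i ≠ j := hij.ne
  have hs2 : s ^ 2 = 1 := by rcases hs with rfl | rfl <;> norm_num
  have hp : ∀ (x : ZLat d) (k : ℤ), pairing (diagVec i j s) (x + k • (latE i + s • latE j))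
      = pairing (diagVec i j s) x + 2 * k := by
    intro x k
    rw [pairing_diag, pairing_diag]
    simp [latE, hne, hne.symm]
    linear_combination k * hs2
  have hj : ((j : ℕ) : ℤ) < d := by exact_mod_cast j.2
  have hi0 : (0 : ℤ) ≤ ((i : ℕ) : ℤ) := by positivity
  have hij' : ((i : ℕ) : ℤ) < ((j : ℕ) : ℤ) := by exact_mod_cast hij
  refine ⟨goodDir_of _ (line_diag hne s) hp,
    phiMono_of _ (line_diag hne s) hp 2 ((d : ℤ) - (i : ℕ) + s * ((d : ℤ) - (j : ℕ)))
      (by norm_num) (by rcases hs with rfl | rfl <;> linarith)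
      (by rcases hs with rfl | rfl <;> linarith) ?_⟩
  intro x k
  rw [pairing_diag, ← sub_eq_iff_eq_add']
  unfold Phi
  rw [← Finset.sum_sub_distrib]
  have : ∀ l : Fin d, (4 * (d : ℤ) + 1) * ((x + k • (latE i + s • latE j)) l) ^ 2
      - 2 * ((d : ℤ) - (l : ℕ)) * (x + k • (latE i + s • latE j)) l
      - ((4 * (d : ℤ) + 1) * (x l) ^ 2 - 2 * ((d : ℤ) - (l : ℕ)) * x l)
      = (if l = i then (4 * (d : ℤ) + 1) * (2 * k * x l + k ^ 2) - 2 * ((d : ℤ) - (l : ℕ)) * k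
        else 0) + (if l = j then (4 * (d : ℤ) + 1) * (2 * k * s * x l + k ^ 2)
          - 2 * ((d : ℤ) - (l : ℕ)) * (k * s) else 0) := by
    intro l
    by_cases h : l = i
    · have h' : l ≠ j := by rw [h]; exact hne
      simp [latE, h, hne]; ring
    · by_cases h' : l = j
      · simp [latE, h', hne.symm]
        linear_combination (4 * (d : ℤ) + 1) * k ^ 2 * hs2
      · simp [latE, h, h']
  rw [Finset.sum_congr rfl (fun l _ => this l), Finset.sum_add_distrib]
  rw [Finset.sum_ite_eq' Finset.univ i, Finset.sum_ite_eq' Finset.univ j]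
  simp
  ring

theorem diag_one {d : ℕ} (i j : Fin d) :
    (fun k => (stdVec d i k + stdVec d j k) / 2) = diagVec i j 1 := by
  funext k; simp [diagVec]

theorem diag_neg_one {d : ℕ} (i j : Fin d) :
    (fun k => (stdVec d i k - stdVec d j k) / 2) = diagVec i j (-1) := by
  funext k; simp [diagVec]; ring

theorem mem_EvecList {d : ℕ} {e : Fin d → ℝ} : e ∈ EvecList d ↔
    (∃ i, e = stdVec d i) ∨ (∃ i j : Fin d, i < j ∧ e = diagVec i j 1) ∨
      (∃ i j : Fin d, i < j ∧ e = diagVec i j (-1)) := by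
  unfold EvecList
  simp only [diag_one, diag_neg_one]
  simp [eq_comm]

theorem good_of_mem {d : ℕ} {e : Fin d → ℝ} (he : e ∈ EvecList d) : GoodDir e ∧ PhiMono e := by
  rcases mem_EvecList.1 he with ⟨i, rfl⟩ | ⟨i, j, hij, rfl⟩ | ⟨i, j, hij, rfl⟩
  · exact goodDir_std i
  · exact goodDir_diag hij (Or.inl rfl)
  · exact goodDir_diag hij (Or.inr rfl)

abbrev dirAt (d k : ℕ) : Fin d → ℝ := (EvecList d).getD (k % (EvecList d).length) 0

theorem EvecList_length_pos {d : ℕ} (hd : 2 ≤ d) : 0 < (EvecList d).length := by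
  apply List.length_pos_of_mem (a := stdVec d ⟨0, by omega⟩)
  exact mem_EvecList.2 (Or.inl ⟨_, rfl⟩)

theorem dirAt_mem {d : ℕ} (hd : 2 ≤ d) (k : ℕ) : dirAt d k ∈ EvecList d := by
  have h := Nat.mod_lt k (EvecList_length_pos hd)
  unfold dirAt
  rw [List.getD_eq_getElem _ _ h]
  exact List.getElem_mem h

theorem dirAt_freq {d : ℕ} (hd : 2 ≤ d) {e : Fin d → ℝ} (he : e ∈ EvecList d) :
    ∃ᶠ k in atTop, dirAt d k = e := by
  obtain ⟨j, hj, rfl⟩ := List.mem_iff_getElem.1 he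
  rw [Filter.frequently_atTop]
  intro a
  refine ⟨j + (EvecList d).length * a, ?_, ?_⟩
  · nlinarith [EvecList_length_pos hd]
  · unfold dirAt
    rw [Nat.add_mul_mod_self_left, Nat.mod_eq_of_lt hj, List.getD_eq_getElem _ _ hj]

/-! ### Convergence -/

theorem monge_pot (t : NNReal) : Monge (fun a b => if t < b then (a : ENNReal)⁻¹ else 0) := by
  intro a a' b b' ha hb
  have h : (a : ENNReal)⁻¹ ≤ (a' : ENNReal)⁻¹ := ENNReal.inv_le_inv.2 (by exact_mod_cast ha)
  by_cases h1 : t < b'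
  · have h2 : t < b := h1.trans_le hb
    simp [h1, h2]
  · by_cases h2 : t < b
    · simpa [h1, h2] using h
    · simp [h1, h2]

def potN {d : ℕ} (x : ZLat d) : ℕ := (1 + Phi x).toNat

theorem potN_pos {d : ℕ} (x : ZLat d) : 0 < potN x := by
  have := Phi_nonneg x
  unfold potN
  omega

def wt {d : ℕ} (x : ZLat d) : NNReal := (potN x : NNReal)⁻¹

theorem wt_inv {d : ℕ} (x : ZLat d) : ((wt x : NNReal) : ENNReal)⁻¹ = (potN x : ENNReal) := by
  unfold wt
  rw [ENNReal.coe_inv (by exact_mod_cast (potN_pos x).ne'), inv_inv]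
  simp

theorem wt_adm (d : ℕ) : Admissible (wt : ZLat d → NNReal) := by
  intro t ht
  obtain ⟨n, hn⟩ := exists_nat_gt (t⁻¹)
  refine (Phi_finite d n).subset ?_
  intro x hx
  simp only [Set.mem_ofPred_eq, wt] at hx ⊢
  have h1 : (potN x : NNReal) < t⁻¹ := by
    rw [lt_inv_comm₀ ht (by exact_mod_cast potN_pos x)] at hx
    exact hx
  have h2 : potN x < n := by exact_mod_cast h1.trans hn
  unfold potN at h2
  omega

theorem wt_lt {d : ℕ} {x y : ZLat d} (h : Phi x < Phi y) : wt y < wt x := by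
  unfold wt
  have h1 : potN x < potN y := by
    have := Phi_nonneg x
    unfold potN
    omega
  exact inv_strictAnti₀ (by exact_mod_cast potN_pos x) (by exact_mod_cast h1)

theorem wt_step {d : ℕ} {e : Fin d → ℝ} (he : GoodDir e ∧ PhiMono e) :
    stepR e (wt : ZLat d → NNReal) = wt :=
  MonoDir.stepR_eq he.1 (wt_adm d) fun x y h1 h2 => (wt_lt (he.2 x y h1 h2)).le

def pot {d : ℕ} (t : NNReal) (u : ZLat d → NNReal) : ENNReal :=
  ∑' x, if t < u x then ((wt x : NNReal) : ENNReal)⁻¹ else 0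

theorem pot_nat {d : ℕ} {t : NNReal} {u : ZLat d → NNReal} (h : {x | t < u x}.Finite) :
    ∃ n : ℕ, pot t u = n := by
  refine ⟨∑ x ∈ h.toFinset, potN x, ?_⟩
  unfold pot
  rw [tsum_eq_sum (s := h.toFinset)]
  · push_cast
    refine Finset.sum_congr rfl fun x hx => ?_
    have hx' : t < u x := by simpa using hx
    simp [hx', wt_inv]
  · intro x hx
    have hx' : ¬ t < u x := by simpa using hx
    simp [hx']

theorem pot_fin {d : ℕ} {t : NNReal} {u : ZLat d → NNReal} (h : pot t u ≠ ⊤) :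
    {x | t < u x}.Finite := by
  refine (ENNReal.finite_const_le_of_tsum_ne_top h one_ne_zero).subset ?_
  intro x hx
  have hx' : t < u x := hx
  simp only [Set.mem_ofPred_eq, hx', if_true, wt_inv]
  exact_mod_cast potN_pos x

theorem pot_zero {d : ℕ} {t : NNReal} {u : ZLat d → NNReal} :
    pot t u = 0 ↔ ∀ x, u x ≤ t := by
  unfold pot
  rw [ENNReal.tsum_eq_zero]
  refine forall_congr' fun x => ?_
  rw [wt_inv]
  have := (potN_pos x).ne'
  by_cases h : t < u x
  · simp [h, this]
  · simp [not_lt.1 h]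

theorem pot_le {d : ℕ} {e : Fin d → ℝ} (he : GoodDir e ∧ PhiMono e) {u : ZLat d → NNReal}
    (hu : Admissible u) (t : NNReal) : pot t (stepR e u) ≤ pot t u := by
  have := stepR_contract he.1 _ (monge_pot t) (wt_adm d) hu
  rw [wt_step he] at this
  exact this

theorem stepR_adm {d : ℕ} {e : Fin d → ℝ} (he : GoodDir e ∧ PhiMono e) {u : ZLat d → NNReal}
    (hu : Admissible u) : Admissible (stepR e u) := by
  intro t ht
  apply pot_fin
  obtain ⟨n, hn⟩ := pot_nat (hu t ht)
  have := pot_le he hu t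
  rw [hn] at this
  exact (this.trans_lt (ENNReal.natCast_lt_top n)).ne

theorem pot_eq_imp {d : ℕ} {e : Fin d → ℝ} (he : GoodDir e ∧ PhiMono e) {u : ZLat d → NNReal}
    (hu : Admissible u) {t : NNReal} (ht : 0 < t) (heq : pot t (stepR e u) = pot t u)
    (x : ZLat d) : t < stepR e u x ↔ t < u x := by
  refine stepR_gt he.1 hu t ?_ x
  intro x y hxy hlt hy
  by_contra hx
  have hP := he.2 x y hxy hlt
  have hlt : pot t (stepR e u) < pot t u := by
    refine stepR_strict he.1 _ (monge_pot t) (wt_adm d) hu (wt_step he) hxy ?_ ?_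
    · simp only [hy, hx, if_true, if_false, wt_inv, add_zero, zero_add]
      have h0 := Phi_nonneg x
      have : potN x < potN y := by unfold potN; omega
      exact_mod_cast this
    · obtain ⟨n, hn⟩ := pot_nat (hu t ht)
      unfold pot at hn
      rw [hn]
      exact ENNReal.natCast_lt_top n
  exact hlt.ne heq

theorem iterR_succ (d : ℕ) (u : ZLat d → NNReal) (k : ℕ) :
    iterR d u (k + 1) = stepR (dirAt d k) (iterR d u k) := rfl

theorem iterR_adm {d : ℕ} (hd : 2 ≤ d) {u : ZLat d → NNReal} (hu : Admissible u) (k : ℕ) :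
    Admissible (iterR d u k) := by
  induction k with
  | zero => exact hu
  | succ k ih => exact stepR_adm (good_of_mem (dirAt_mem hd k)) ih

theorem iterR_pot_anti {d : ℕ} (hd : 2 ≤ d) {u : ZLat d → NNReal} (hu : Admissible u)
    (t : NNReal) : Antitone (fun k => pot t (iterR d u k)) :=
  antitone_nat_of_succ_le fun k => pot_le (good_of_mem (dirAt_mem hd k)) (iterR_adm hd hu k) t

theorem iterR_bdd {d : ℕ} (hd : 2 ≤ d) {u : ZLat d → NNReal} (hu : Admissible u) :
    ∃ B, ∀ k x, iterR d u k x ≤ B := by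
  obtain ⟨B, hB⟩ := hu.bdd
  refine ⟨B, fun k => ?_⟩
  have h0 : pot B u = 0 := pot_zero.2 fun x => hB ⟨x, rfl⟩
  rw [← pot_zero]
  have := iterR_pot_anti hd hu B (Nat.zero_le k)
  have h1 : pot B (iterR d u k) ≤ pot B u := this
  rw [h0] at h1
  exact le_antisymm h1 bot_le

theorem iterR_stab {d : ℕ} (hd : 2 ≤ d) {u : ZLat d → NNReal} (hu : Admissible u)
    {t : NNReal} (ht : 0 < t) :
    ∃ K, ∀ k ≥ K, ∀ x, (t < iterR d u k x ↔ t < iterR d u K x) := by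
  choose n hn using fun k => pot_nat (iterR_adm hd hu k t ht)
  have hanti := iterR_pot_anti hd hu t
  have hmin : ∃ K, ∀ k, n K ≤ n k := ⟨Function.argmin n, fun k => Function.argmin_le n k⟩
  obtain ⟨K, hK⟩ := hmin
  have hconst : ∀ k ≥ K, pot t (iterR d u k) = pot t (iterR d u K) := by
    intro k hk
    refine le_antisymm (hanti hk) ?_
    rw [hn, hn]
    exact_mod_cast hK k
  refine ⟨K, fun k hk => ?_⟩
  induction k, hk using Nat.le_induction with
  | base => intro x; rfl
  | succ k hk ih =>
    intro x
    rw [← ih x, iterR_succ]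
    refine pot_eq_imp (good_of_mem (dirAt_mem hd k)) (iterR_adm hd hu k) ht ?_ x
    rw [← iterR_succ, hconst k hk, hconst (k + 1) (by omega)]

theorem iterR_tendsto {d : ℕ} (hd : 2 ≤ d) {u : ZLat d → NNReal} (hu : Admissible u)
    (x : ZLat d) : Tendsto (fun k => iterR d u k x) atTop (𝓝 (RZd d u x)) := by
  obtain ⟨B, hB⟩ := iterR_bdd hd hu
  have : ∃ c, Tendsto (fun k => iterR d u k x) atTop (𝓝 c) := by
    refine tendsto_of_no_upcrossings dense_univ ?_ ?_ ?_
    · rintro a _ b _ hab ⟨h1, h2⟩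
      obtain ⟨K, hK⟩ := iterR_stab hd hu (bot_le.trans_lt hab : 0 < b)
      rw [Filter.frequently_atTop] at h1 h2
      obtain ⟨k1, hk1, h1⟩ := h1 K
      obtain ⟨k2, hk2, h2⟩ := h2 K
      have h3 := (hK k2 hk2 x).1 h2
      have h4 := (hK k1 hk1 x).2 h3
      exact absurd (h4.trans (h1.trans hab)) (lt_irrefl _)
    · exact Filter.isBoundedUnder_of ⟨B, fun k => hB k x⟩
    · exact Filter.isBoundedUnder_of ⟨0, fun k => bot_le⟩
  obtain ⟨c, hc⟩ := this
  have h : RZd d u x = c := hc.limUnder_eq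
  rw [h]
  exact hc

theorem RZd_mono {d : ℕ} (hd : 2 ≤ d) {u : ZLat d → NNReal} (hu : Admissible u)
    {e : Fin d → ℝ} (he : e ∈ EvecList d) : MonoDir e (RZd d u) := by
  intro x y hxy hlt
  by_contra hcon
  push Not at hcon
  have h1 := (iterR_tendsto hd hu x).comp (tendsto_add_atTop_nat 1)
  have h2 := (iterR_tendsto hd hu y).comp (tendsto_add_atTop_nat 1)
  have h3 := h1.eventually_lt h2 hcon
  obtain ⟨k, hk, hk'⟩ := ((dirAt_freq hd he).and_eventually h3).exists
  have := stepR_mono (e := e) (iterR_adm hd hu k) x y hxy hlt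
  rw [← hk, ← iterR_succ] at this
  exact absurd hk' (not_lt.2 this)

/-! ### The cost `|a - b|^p` -/

theorem abs_rpow_conv {p : ℝ} (hp : 1 ≤ p) {X Y l m : ℝ} (hl : 0 ≤ l) (hm : 0 ≤ m)
    (hlm : l + m = 1) : |l * Y + m * X| ^ p ≤ l * |Y| ^ p + m * |X| ^ p := by
  have h1 : |l * Y + m * X| ≤ l * |Y| + m * |X| := by
    refine (abs_add_le _ _).trans (le_of_eq ?_)
    rw [abs_mul, abs_mul, abs_of_nonneg hl, abs_of_nonneg hm]
  have h2 := (convexOn_rpow hp).2 (x := |Y|) (y := |X|) (abs_nonneg Y) (abs_nonneg X) hl hm hlm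
  simp only [smul_eq_mul] at h2
  exact (Real.rpow_le_rpow (abs_nonneg _) h1 (by linarith)).trans h2

theorem abs_rpow_sconv {p : ℝ} (hp : 1 < p) {X Y l m : ℝ} (hXY : X < Y) (hl : 0 < l) (hm : 0 < m)
    (hlm : l + m = 1) : |l * Y + m * X| ^ p < l * |Y| ^ p + m * |X| ^ p := by
  by_cases h : |Y| = |X|
  · have hY : X = -Y := by
      rcases abs_eq_abs.1 h with h | h
      · exact absurd h hXY.ne'
      · linarith
    subst hY
    have hY0 : 0 < Y := by linarith
    rw [abs_neg, ← add_mul, hlm, one_mul, abs_of_pos hY0]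
    refine Real.rpow_lt_rpow (abs_nonneg _) ?_ (by linarith)
    rw [abs_lt]
    constructor <;> nlinarith
  · have h1 : |l * Y + m * X| ≤ l * |Y| + m * |X| := by
      refine (abs_add_le _ _).trans (le_of_eq ?_)
      rw [abs_mul, abs_mul, abs_of_nonneg hl.le, abs_of_nonneg hm.le]
    have h2 := (strictConvexOn_rpow hp).2 (x := |Y|) (y := |X|) (abs_nonneg Y) (abs_nonneg X) h
      hl hm hlm
    simp only [smul_eq_mul] at h2
    exact (Real.rpow_le_rpow (abs_nonneg _) h1 (by linarith)).trans_lt h2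

theorem monge_real {p : ℝ} (hp : 1 ≤ p) {a a' b b' : ℝ} (ha : a' ≤ a) (hb : b' ≤ b) :
    |a - b| ^ p + |a' - b'| ^ p ≤ |a - b'| ^ p + |a' - b| ^ p := by
  by_cases hD : (a - a') + (b - b') = 0
  · have h1 : a = a' := by linarith
    have h2 : b = b' := by linarith
    rw [h1, h2]
  · have hD' : 0 < (a - a') + (b - b') := lt_of_le_of_ne (by linarith) (Ne.symm hD)
    set D := (a - a') + (b - b') with hDdef
    have hl : 0 ≤ (a - a') / D := div_nonneg (by linarith) hD'.le
    have hm : 0 ≤ (b - b') / D := div_nonneg (by linarith) hD'.le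
    have hlm : (a - a') / D + (b - b') / D = 1 := by
      rw [← add_div, ← hDdef, div_self hD]
    have h1 := abs_rpow_conv hp (X := a' - b) (Y := a - b') hl hm hlm
    have h2 := abs_rpow_conv hp (X := a' - b) (Y := a - b') hm hl (by rw [add_comm]; exact hlm)
    have e1 : (a - a') / D * (a - b') + (b - b') / D * (a' - b) = a - b := by
      field_simp; rw [hDdef]; ring
    have e2 : (b - b') / D * (a - b') + (a - a') / D * (a' - b) = a' - b' := by
      field_simp; rw [hDdef]; ring
    rw [e1] at h1
    rw [e2] at h2
    linear_combination h1 + h2 + (|a - b'| ^ p + |a' - b| ^ p) * hlm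

theorem monge_real_strict {p : ℝ} (hp : 1 < p) {a a' b b' : ℝ} (ha : a' < a) (hb : b' < b) :
    |a - b| ^ p + |a' - b'| ^ p < |a - b'| ^ p + |a' - b| ^ p := by
  have hD' : 0 < (a - a') + (b - b') := by linarith
  have hD := hD'.ne'
  set D := (a - a') + (b - b') with hDdef
  have hl : 0 < (a - a') / D := div_pos (by linarith) hD'
  have hm : 0 < (b - b') / D := div_pos (by linarith) hD'
  have hlm : (a - a') / D + (b - b') / D = 1 := by
    rw [← add_div, ← hDdef, div_self hD]
  have hXY : a' - b < a - b' := by linarith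
  have h1 := abs_rpow_sconv hp hXY hl hm hlm
  have h2 := abs_rpow_sconv hp hXY hm hl (by rw [add_comm]; exact hlm)
  have e1 : (a - a') / D * (a - b') + (b - b') / D * (a' - b) = a - b := by
    field_simp; rw [hDdef]; ring
  have e2 : (b - b') / D * (a - b') + (a - a') / D * (a' - b) = a' - b' := by
    field_simp; rw [hDdef]; ring
  rw [e1] at h1
  rw [e2] at h2
  linear_combination h1 + h2 + (|a - b'| ^ p + |a' - b| ^ p) * hlm

def cLp (p : ℝ) (a b : NNReal) : ENNReal := ENNReal.ofReal (|(a : ℝ) - (b : ℝ)| ^ p)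

theorem cLp_monge {p : ℝ} (hp : 1 ≤ p) : Monge (cLp p) := by
  intro a a' b b' ha hb
  unfold cLp
  rw [← ENNReal.ofReal_add (by positivity) (by positivity),
    ← ENNReal.ofReal_add (by positivity) (by positivity)]
  exact ENNReal.ofReal_le_ofReal (monge_real hp (by exact_mod_cast ha) (by exact_mod_cast hb))

theorem cLp_strict {p : ℝ} (hp : 1 < p) {a a' b b' : NNReal} (ha : a' < a) (hb : b' < b) :
    cLp p a b + cLp p a' b' < cLp p a b' + cLp p a' b := by
  unfold cLp
  rw [← ENNReal.ofReal_add (by positivity) (by positivity),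
    ← ENNReal.ofReal_add (by positivity) (by positivity)]
  have h := monge_real_strict hp (a := a) (a' := a') (b := b) (b' := b')
    (by exact_mod_cast ha) (by exact_mod_cast hb)
  exact (ENNReal.ofReal_lt_ofReal_iff (lt_of_le_of_lt (by positivity) h)).2 h

theorem cLp_cont {p : ℝ} (hp : 1 ≤ p) : Continuous (fun q : NNReal × NNReal => cLp p q.1 q.2) := by
  unfold cLp
  refine ENNReal.continuous_ofReal.comp ?_
  refine Continuous.rpow_const ?_ (fun _ => Or.inr (by linarith))
  fun_prop

theorem cLp_tendsto {p : ℝ} (hp : 1 ≤ p) {f g : ℕ → NNReal} {a b : NNReal}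
    (hf : Tendsto f atTop (𝓝 a)) (hg : Tendsto g atTop (𝓝 b)) :
    Tendsto (fun k => cLp p (f k) (g k)) atTop (𝓝 (cLp p a b)) := by
  have h := (cLp_cont hp).tendsto (a, b)
  exact Tendsto.comp (f := fun k => (f k, g k)) h (hf.prodMk_nhds hg)

theorem cLp_le {p : ℝ} (hp : 1 ≤ p) (a b : NNReal) :
    cLp p a b ≤ (a : ENNReal) ^ p + (b : ENNReal) ^ p := by
  have hp0 : 0 ≤ p := by linarith
  have key : ∀ a : NNReal, (a : ENNReal) ^ p = ENNReal.ofReal ((a : ℝ) ^ p) := by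
    intro a
    rw [← ENNReal.ofReal_rpow_of_nonneg (NNReal.coe_nonneg a) hp0, ENNReal.ofReal_coe_nnreal]
  rw [key, key, cLp]
  rcases le_total a b with h | h
  · refine le_trans (ENNReal.ofReal_le_ofReal (Real.rpow_le_rpow (abs_nonneg _) ?_ hp0))
      le_add_self
    have h' : (a : ℝ) ≤ b := by exact_mod_cast h
    rw [abs_le]
    constructor <;> linarith [a.2, b.2, NNReal.coe_nonneg a, NNReal.coe_nonneg b]
  · refine le_trans (ENNReal.ofReal_le_ofReal (Real.rpow_le_rpow (abs_nonneg _) ?_ hp0))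
      le_self_add
    have h' : (b : ℝ) ≤ a := by exact_mod_cast h
    rw [abs_le]
    constructor <;> linarith [NNReal.coe_nonneg a, NNReal.coe_nonneg b]

theorem adm_of_sum {α : Type*} {p : ℝ} (hp : 1 ≤ p) {u : α → NNReal}
    (hu : (∑' x, (u x : ENNReal) ^ p) < ⊤) : Admissible u := by
  intro t ht
  have ht' : (t : ENNReal) ^ p ≠ 0 := by
    have : (0 : ENNReal) < (t : ENNReal) := by exact_mod_cast ht
    exact (ENNReal.rpow_pos this ENNReal.coe_ne_top).ne'
  refine (ENNReal.finite_const_le_of_tsum_ne_top hu.ne ht').subset ?_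
  intro x hx
  have hx' : t < u x := hx
  exact ENNReal.rpow_le_rpow (by exact_mod_cast hx'.le) (by linarith)

/-! ### Functions with strictly decreasing values -/

theorem StrictRan.infinite {α : Type*} {u : α → NNReal} (hu : Admissible u) (h : StrictRan u) :
    {x | 0 < u x}.Infinite := by
  intro hfin
  have h1 := h (hfin.toFinset.card + 1) (Nat.succ_pos _)
  have h2 := bot_le.trans_lt h1
  obtain ⟨Ω, h3, h4⟩ := (nthLargest_gt u hu.bdd (Nat.succ_pos _) 0).1 h2
  have h5 : Ω ⊆ hfin.toFinset := by
    intro x hx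
    simpa using h4 x hx
  have := Finset.card_le_card h5
  omega

theorem StrictRan.inj {α : Type*} {u : α → NNReal} (hu : Admissible u) (h : StrictRan u)
    {x y : α} (hxy : u x = u y) (hx : 0 < u x) : x = y := by
  classical
  by_contra hne
  have hfin := hu (u x) hx
  set A := hfin.toFinset with hA
  have hmem : ∀ z, z ∈ A ↔ u x < u z := fun z => by simp [hA]
  have h1 := h (A.card + 1) (Nat.succ_pos _)
  obtain ⟨Ω, h3, h4⟩ := (nthLargest_gt u hu.bdd (Nat.succ_pos _) _).1 h1
  have h5 : u x ≤ nthLargest u (A.card + 1 + 1) := by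
    refine le_of_forall_lt fun t ht => ?_
    rw [nthLargest_gt u hu.bdd (Nat.succ_pos _)]
    refine ⟨insert x (insert y A), ?_, ?_⟩
    · rw [Finset.card_insert_of_notMem, Finset.card_insert_of_notMem]
      · rw [hmem, ← hxy]; exact lt_irrefl _
      · rw [Finset.mem_insert, hmem]
        rintro (h | h)
        · exact hne h
        · exact lt_irrefl _ h
    · intro z hz
      rcases Finset.mem_insert.1 hz with rfl | hz
      · exact ht
      · rcases Finset.mem_insert.1 hz with rfl | hz
        · rw [← hxy]; exact ht
        · exact ht.trans ((hmem z).1 hz)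
  have h6 : Ω ⊆ A := by
    intro z hz
    rw [hmem]
    exact h5.trans_lt (h4 z hz)
  have := Finset.card_le_card h6
  omega

/-- Moving a coordinate along a standard direction. -/
theorem move_std {d : ℕ} {u : ZLat d → NNReal} (hm : ∀ e ∈ EvecList d, MonoDir e u) (i : Fin d)
    {x : ZLat d} (hx : 0 < u x) (a : ℤ) (ha : posIdx (2 * a) < posIdx (2 * x i)) :
    0 < u (Function.update x i a) := by
  refine hx.trans_le (hm (stdVec d i) (mem_EvecList.2 (Or.inl ⟨i, rfl⟩)) _ _ ?_ ?_)
  · rw [line_std]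
    refine ⟨x i - a, ?_⟩
    ext l
    by_cases h : l = i
    · subst h; simp [latE]
    · simp [latE, h]
  · simp only [pos, pairing_std, Function.update_self]
    exact ha

/-- Trading from coordinate `i` to coordinate `j`. -/
theorem move_diag {d : ℕ} {u : ZLat d → NNReal} (hm : ∀ e ∈ EvecList d, MonoDir e u) {i j : Fin d}
    (hij : i ≠ j) {x : ZLat d} (hx : 0 < u x) (hxj : x j = 0) (k : ℤ) (hk : 0 < k)
    (hki : k < x i) :
    0 < u (Function.update (Function.update x i (x i - k)) j k) := by
  rcases lt_or_gt_of_ne hij with h | h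
  · refine hx.trans_le (hm (diagVec i j (-1)) (mem_EvecList.2 (Or.inr (Or.inr ⟨i, j, h, rfl⟩)))
      _ _ ?_ ?_)
    · rw [line_diag hij]
      refine ⟨k, ?_⟩
      ext l
      by_cases h1 : l = j
      · subst h1; simp [latE, hij.symm, hxj]
      · by_cases h2 : l = i
        · subst h2; simp [latE, h1]
        · simp [latE, h1, h2]
    · simp only [pos, pairing_diag, Function.update_self, Function.update_of_ne hij, hxj, posIdx]
      split_ifs <;> omega
  · refine hx.trans_le (hm (diagVec j i (-1)) (mem_EvecList.2 (Or.inr (Or.inr ⟨j, i, h, rfl⟩)))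
      _ _ ?_ ?_)
    · rw [line_diag hij.symm]
      refine ⟨-k, ?_⟩
      ext l
      by_cases h1 : l = j
      · subst h1; simp [latE, hij.symm, hxj]
      · by_cases h2 : l = i
        · subst h2; simp [latE, h1]
        · simp [latE, h1, h2]
    · simp only [pos, pairing_diag, Function.update_self, Function.update_of_ne hij, hxj, posIdx]
      split_ifs <;> omega

theorem pos_aux {d : ℕ} {u : ZLat d → NNReal} (hm : ∀ e ∈ EvecList d, MonoDir e u) (i : Fin d)
    (z : ZLat d) (S : Finset (Fin d)) (hS : i ∉ S) : ∀ B : ℤ, 0 < B →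
    (∃ x, 0 < u x ∧ B + ∑ j ∈ S, (|z j| + 1) ≤ x i) →
      ∃ x, 0 < u x ∧ B ≤ x i ∧ ∀ j ∈ S, x j = z j := by
  classical
  induction S using Finset.induction_on with
  | empty =>
    rintro B hB ⟨x, hx, hx'⟩
    exact ⟨x, hx, by simpa using hx', by simp⟩
  | insert j S hj ih =>
    rintro B hB ⟨x, hx, hx'⟩
    have hiS : i ∉ S := fun h => hS (Finset.mem_insert_of_mem h)
    have hij : i ≠ j := fun h => hS (h ▸ Finset.mem_insert_self _ _)
    have hz : 0 ≤ |z j| := abs_nonneg _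
    rw [Finset.sum_insert hj] at hx'
    obtain ⟨y, hy, hyi, hyS⟩ := ih hiS (B + (|z j| + 1)) (by linarith) ⟨x, hx, by linarith⟩
    have h1 : 0 < u (Function.update y j 0) := by
      by_cases h0 : y j = 0
      · rw [← h0, Function.update_eq_self]; exact hy
      · refine move_std hm j hy 0 ?_
        unfold posIdx
        split_ifs <;> omega
    have h2 := move_diag hm hij h1 (by simp) (|z j| + 1) (by linarith)
      (by rw [Function.update_of_ne hij]; linarith)
    have h3 := move_std hm j h2 (z j) (by
      rw [Function.update_self]
      have := abs_le.1 (le_refl |z j|)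
      unfold posIdx
      split_ifs <;> omega)
    refine ⟨_, h3, ?_, ?_⟩
    · simp only [Function.update_of_ne hij, Function.update_self]
      linarith
    · intro l hl
      rcases Finset.mem_insert.1 hl with rfl | hl
      · simp
      · have hlj : l ≠ j := fun h => hj (h ▸ hl)
        have hli : l ≠ i := fun h => hiS (h ▸ hl)
        simp only [Function.update_of_ne hlj, Function.update_of_ne hli]
        exact hyS l hl

theorem pos_of_mono {d : ℕ} {u : ZLat d → NNReal} (hm : ∀ e ∈ EvecList d, MonoDir e u)
    (hinf : {x | 0 < u x}.Infinite) (z : ZLat d) : 0 < u z := by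
  classical
  set M : ℤ := ∑ j, (|z j| + 1) + 2 with hM
  have hMp : 0 < M := by
    have : 0 ≤ ∑ j, (|z j| + 1) := Finset.sum_nonneg fun j _ => by positivity
    linarith
  have hex : ∃ x, 0 < u x ∧ ∃ i, M < |x i| := by
    by_contra hcon
    push Not at hcon
    apply hinf
    refine (Set.finite_Icc (fun _ => -M : ZLat d) (fun _ => M)).subset ?_
    intro x hx
    exact ⟨fun i => (abs_le.1 (hcon x hx i)).1, fun i => (abs_le.1 (hcon x hx i)).2⟩
  obtain ⟨x, hx, i, hi⟩ := hex
  have h1 : ∃ y, 0 < u y ∧ M ≤ y i := by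
    refine ⟨_, move_std hm i hx (|x i| - 1) ?_, ?_⟩
    · unfold posIdx
      rcases abs_cases (x i) with ⟨h, h'⟩ | ⟨h, h'⟩ <;> split_ifs <;> omega
    · rw [Function.update_self]; linarith
  obtain ⟨y, hy, hyi⟩ := h1
  obtain ⟨y', hy', hyi', hyS⟩ := pos_aux hm i z (Finset.univ.erase i) (by simp) (|z i| + 1)
    (by positivity) ⟨y, hy, by
      have := Finset.add_sum_erase Finset.univ (fun j => |z j| + 1) (Finset.mem_univ i)
      rw [this]; linarith⟩
  have h2 := move_std hm i hy' (z i) (by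
    have := abs_le.1 (le_refl |z i|)
    unfold posIdx
    split_ifs <;> omega)
  have h3 : Function.update y' i (z i) = z := by
    ext l
    by_cases h : l = i
    · subst h; simp
    · rw [Function.update_of_ne h]
      exact hyS l (by simp [h])
  rwa [h3] at h2

/-! ### Main results -/

theorem iterR_contract {d : ℕ} (hd : 2 ≤ d) {c : NNReal → NNReal → ENNReal} (hc : Monge c)
    {u v : ZLat d → NNReal} (hu : Admissible u) (hv : Admissible v) (k : ℕ) :
    ∑' x, c (iterR d u k x) (iterR d v k x) ≤ ∑' x, c (u x) (v x) := by
  induction k with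
  | zero => exact le_rfl
  | succ k ih =>
    refine le_trans ?_ ih
    rw [iterR_succ, iterR_succ]
    exact stepR_contract (good_of_mem (dirAt_mem hd k)).1 c hc (iterR_adm hd hu k)
      (iterR_adm hd hv k)

theorem RZd_contract {d : ℕ} (hd : 2 ≤ d) {p : ℝ} (hp : 1 ≤ p)
    {u v : ZLat d → NNReal} (hu : Admissible u) (hv : Admissible v) :
    ∑' x, cLp p (RZd d u x) (RZd d v x) ≤ ∑' x, cLp p (u x) (v x) := by
  rw [ENNReal.tsum_eq_iSup_sum]
  refine iSup_le fun S => ?_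
  have h : Tendsto (fun k => ∑ x ∈ S, cLp p (iterR d u k x) (iterR d v k x)) atTop
      (𝓝 (∑ x ∈ S, cLp p (RZd d u x) (RZd d v x))) := by
    refine tendsto_finsetSum S fun x _ => ?_
    exact cLp_tendsto hp (iterR_tendsto hd hu x) (iterR_tendsto hd hv x)
  refine le_of_tendsto' h fun k => ?_
  exact (ENNReal.sum_le_tsum S).trans (iterR_contract hd (cLp_monge hp) hu hv k)

theorem RZd_of_mono {d : ℕ} (hd : 2 ≤ d) {u : ZLat d → NNReal} (hu : Admissible u)
    (h : ∀ k, iterR d u k = u) : RZd d u = u := by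
  funext x
  have h1 := iterR_tendsto hd hu x
  simp only [h] at h1
  exact tendsto_nhds_unique h1 tendsto_const_nhds

theorem RZd_stepR {d : ℕ} (hd : 2 ≤ d) {v : ZLat d → NNReal} (hv : Admissible v) (k : ℕ)
    {p : ℝ} (hp : 1 ≤ p) {u : ZLat d → NNReal} (hu : Admissible u)
    (hue : ∀ e ∈ EvecList d, stepR e u = u) :
    ∑' x, cLp p (u x) (RZd d v x) ≤ ∑' x, cLp p (u x) (iterR d v k x) := by
  rw [ENNReal.tsum_eq_iSup_sum]
  refine iSup_le fun S => ?_
  have h : Tendsto (fun k => ∑ x ∈ S, cLp p (u x) (iterR d v k x)) atTop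
      (𝓝 (∑ x ∈ S, cLp p (u x) (RZd d v x))) := by
    refine tendsto_finsetSum S fun x _ => ?_
    exact cLp_tendsto hp tendsto_const_nhds (iterR_tendsto hd hv x)
  have hanti : Antitone (fun k => ∑' x, cLp p (u x) (iterR d v k x)) := by
    refine antitone_nat_of_succ_le fun k => ?_
    have := stepR_contract (good_of_mem (dirAt_mem hd k)).1 _ (cLp_monge hp) hu
      (iterR_adm hd hv k)
    rw [hue _ (dirAt_mem hd k), ← iterR_succ] at this
    exact this
  refine le_of_tendsto h ?_
  filter_upwards [eventually_ge_atTop k] with n hn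
  exact (ENNReal.sum_le_tsum S).trans (hanti hn)

theorem equality_case {d : ℕ} (hd : 2 ≤ d) {p : ℝ} (hp : 1 < p) {u v : ZLat d → NNReal}
    (hu : Admissible u) (hv : Admissible v) (hfin : ∑' x, cLp p (u x) (v x) < ⊤)
    (hus : RZd d u = u) (hst : StrictRan u)
    (heq : ∑' x, cLp p (RZd d u x) (RZd d v x) = ∑' x, cLp p (u x) (v x)) : v = RZd d v := by
  have hm : ∀ e ∈ EvecList d, MonoDir e u := by
    intro e he
    have := RZd_mono hd hu he
    rwa [hus] at this
  have hue : ∀ e ∈ EvecList d, stepR e u = u := fun e he =>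
    (hm e he).stepR_eq (good_of_mem he).1 hu
  have hpos : ∀ x, 0 < u x := pos_of_mono hm (hst.infinite hu)
  rw [hus] at heq
  symm
  apply RZd_of_mono hd hv
  intro k
  induction k with
  | zero => rfl
  | succ k ih =>
    have hmem := dirAt_mem hd k
    have hgood := good_of_mem hmem
    rw [iterR_succ, ih]
    refine MonoDir.stepR_eq hgood.1 hv ?_
    intro x y hxy hlt
    by_contra hcon
    push Not at hcon
    have h1 : u y < u x := by
      refine lt_of_le_of_ne (hm _ hmem x y hxy hlt) fun h => ?_
      have := hst.inj hu h (hpos y)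
      subst this
      exact lt_irrefl _ hlt
    have h2 := stepR_strict hgood.1 _ (cLp_monge hp.le) hu hv (hue _ hmem) hxy
      (cLp_strict hp h1 hcon) hfin
    have h3 := RZd_stepR hd hv (k + 1) hp.le hu hue
    rw [iterR_succ, ih, heq] at h3
    exact absurd h2 (not_lt.2 h3)

/-- The Schwarz rearrangement is a contraction in ℓ^p, with the characterization of
the equality case for p > 1. -/
theorem stmt15 (d : ℕ) (hd : 2 ≤ d) (p : ℝ) (hp : 1 ≤ p) (u v : ZLat d → NNReal)
    (hu : (∑' x : ZLat d, (u x : ENNReal) ^ p) < ⊤)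
    (hv : (∑' x : ZLat d, (v x : ENNReal) ^ p) < ⊤) :
    (∑' x : ZLat d, ENNReal.ofReal (|(RZd d u x : ℝ) - (RZd d v x : ℝ)| ^ p) ≤
      ∑' x : ZLat d, ENNReal.ofReal (|(u x : ℝ) - (v x : ℝ)| ^ p)) ∧
    (1 < p → RZd d u = u → StrictRan u →
      ((∑' x : ZLat d, ENNReal.ofReal (|(RZd d u x : ℝ) - (RZd d v x : ℝ)| ^ p)) =
        (∑' x : ZLat d, ENNReal.ofReal (|(u x : ℝ) - (v x : ℝ)| ^ p)) ↔ v = RZd d v)) := by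
  have hua := adm_of_sum hp hu
  have hva := adm_of_sum hp hv
  have hfin : ∑' x, cLp p (u x) (v x) < ⊤ := by
    refine (ENNReal.tsum_le_tsum fun x => cLp_le hp (u x) (v x)).trans_lt ?_
    rw [ENNReal.tsum_add]
    exact ENNReal.add_lt_top.2 ⟨hu, hv⟩
  refine ⟨RZd_contract hd hp hua hva, fun hp1 hus hst => ⟨fun h => ?_, fun h => ?_⟩⟩
  · exact equality_case hd hp1 hua hva hfin hus hst h
  · rw [hus, ← h]

end
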